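/- Let α, β ∈ ℝ with 0 ≤ β ≤ α, let n, u ∈ ℝ³ be unit vectors, and let r ∈ ℝ. Define S1 := ((√(α+β)+√(α−β))/2) • 1 + ((√(α+β)−√(α−β))/2) • σ_n and ρ := (1/2) • (1 + r • σ_u). Then 2 • (S1 * ρ * S1) = (α + r·β·(n ⬝ u)) • 1 + (r·√(α²−β²)) • σ_u + (β + r·(α − √(α²−β²))·(n ⬝ u)) • σ_n. Equivalently, the selective post-measurement state conditioned on outcome E1 is Q1⁻¹ times this matrix divided by 2, where Q1 = α + rβ(n ⬝ u). -/

import Mathlib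

open Matrix

noncomputable def σx : Matrix (Fin 2) (Fin 2) ℂ := !![0, 1; 1, 0]
noncomputable def σy : Matrix (Fin 2) (Fin 2) ℂ := !![0, -Complex.I; Complex.I, 0]
noncomputable def σz : Matrix (Fin 2) (Fin 2) ℂ := !![1, 0; 0, -1]

/-- For `v = (v1, v2, v3) ∈ ℝ³`, `σ_v := v1 • σx + v2 • σy + v3 • σz`. -/
noncomputable def pauliVec (v : Fin 3 → ℝ) : Matrix (Fin 2) (Fin 2) ℂ :=
  v 0 • σx + v 1 • σy + v 2 • σz

/-- Euclidean inner product on ℝ³. -/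
def dot3 (v w : Fin 3 → ℝ) : ℝ := v 0 * w 0 + v 1 * w 1 + v 2 * w 2

/-!
The operator `S₁` is a square root of `E₁`, so the identity part of `ρ` contributes
`S₁ * S₁ = α • 1 + β • σ_n` to `2 • (S₁ * ρ * S₁)`. The Bloch part contributes `S₁ * σ_u * S₁`,
which only depends on the Clifford relations `σ_n * σ_n = 1` and
`σ_n * σ_u + σ_u * σ_n = 2 (n ⬝ u) • 1`: they give the reflection formula
`σ_n * σ_u * σ_n = 2 (n ⬝ u) • σ_n - σ_u`. The anticommutator relation is the polarization of
`σ_v * σ_v = (v ⬝ v) • 1`.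
-/

section Clifford

variable {R A : Type*} [CommRing R] [Ring A] [Algebra R A] {c q : R} {N U : A}

theorem smul_one_add_smul_mul_self (a b : R) (hN : N * N = q • (1 : A)) :
    (a • (1 : A) + b • N) * (a • (1 : A) + b • N)
      = (a ^ 2 + b ^ 2 * q) • (1 : A) + (2 * (a * b)) • N := by
  simp only [mul_add, add_mul, smul_mul_assoc, mul_smul_comm, one_mul, mul_one, hN]
  module

theorem mul_mul_self_eq_smul_sub_smul (hN : N * N = q • (1 : A))
    (hNU : N * U + U * N = c • (1 : A)) :
    N * U * N = c • N - q • U := by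
  calc N * U * N = (N * U + U * N) * N - U * (N * N) := by noncomm_ring
    _ = c • N - q • U := by
      rw [hNU, hN, smul_mul_assoc, one_mul, mul_smul_comm, mul_one]

theorem smul_one_add_smul_mul_mul_self (a b : R) (hN : N * N = q • (1 : A))
    (hNU : N * U + U * N = c • (1 : A)) :
    (a • (1 : A) + b • N) * U * (a • (1 : A) + b • N)
      = (a * b * c) • (1 : A) + (a ^ 2 - b ^ 2 * q) • U + (b ^ 2 * c) • N := by
  calc (a • (1 : A) + b • N) * U * (a • (1 : A) + b • N)
      = a ^ 2 • U + (a * b) • (N * U + U * N) + b ^ 2 • (N * U * N) := by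
        simp only [mul_add, add_mul, smul_mul_assoc, mul_smul_comm, one_mul, mul_one]
        module
    _ = (a * b * c) • (1 : A) + (a ^ 2 - b ^ 2 * q) • U + (b ^ 2 * c) • N := by
        rw [hNU, mul_mul_self_eq_smul_sub_smul hN hNU]
        module

end Clifford

section SqrtEffect

variable {A : Type*} [Ring A] [Algebra ℝ A] {α β d : ℝ} {N U : A}

/-- Half the sum of the eigenvalues of `S₁`: its coefficient along the identity. -/
noncomputable def sqrtHalfSum (α β : ℝ) : ℝ := (√(α + β) + √(α - β)) / 2

/-- Half the difference of the eigenvalues of `S₁`: its coefficient along `N`. -/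
noncomputable def sqrtHalfDiff (α β : ℝ) : ℝ := (√(α + β) - √(α - β)) / 2

/-- The operator `S₁` of the measurement: for an involution `N` and `|β| ≤ α`, the square root of
the effect `α • 1 + β • N`, acting by `√(α + β)` and `√(α - β)` where `N` is `1` and `-1`. -/
noncomputable def sqrtEffect (α β : ℝ) (N : A) : A :=
  sqrtHalfSum α β • (1 : A) + sqrtHalfDiff α β • N

theorem sqrtHalfSum_sq_add_sqrtHalfDiff_sq (h : |β| ≤ α) :
    sqrtHalfSum α β ^ 2 + sqrtHalfDiff α β ^ 2 = α := by
  have hadd : √(α + β) ^ 2 = α + β := Real.sq_sqrt (by linarith [neg_le_of_abs_le h])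
  have hsub : √(α - β) ^ 2 = α - β := Real.sq_sqrt (by linarith [le_of_abs_le h])
  rw [sqrtHalfSum, sqrtHalfDiff]
  linear_combination (hadd + hsub) / 2

theorem two_mul_sqrtHalfSum_mul_sqrtHalfDiff (h : |β| ≤ α) :
    2 * (sqrtHalfSum α β * sqrtHalfDiff α β) = β := by
  have hadd : √(α + β) ^ 2 = α + β := Real.sq_sqrt (by linarith [neg_le_of_abs_le h])
  have hsub : √(α - β) ^ 2 = α - β := Real.sq_sqrt (by linarith [le_of_abs_le h])
  rw [sqrtHalfSum, sqrtHalfDiff]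
  linear_combination (hadd - hsub) / 2

theorem sqrtHalfSum_sq_sub_sqrtHalfDiff_sq (h : |β| ≤ α) :
    sqrtHalfSum α β ^ 2 - sqrtHalfDiff α β ^ 2 = √(α ^ 2 - β ^ 2) := by
  rw [sqrtHalfSum, sqrtHalfDiff, sq_sub_sq α, Real.sqrt_mul (by linarith [neg_le_of_abs_le h])]
  ring

theorem sqrtEffect_mul_self (h : |β| ≤ α) (hN : N * N = 1) :
    sqrtEffect α β N * sqrtEffect α β N = α • (1 : A) + β • N := by
  rw [sqrtEffect, smul_one_add_smul_mul_self _ _ (hN.trans (one_smul ℝ 1).symm), mul_one,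
    sqrtHalfSum_sq_add_sqrtHalfDiff_sq h, two_mul_sqrtHalfSum_mul_sqrtHalfDiff h]

theorem sqrtEffect_mul_mul_self (h : |β| ≤ α) (hN : N * N = 1)
    (hNU : N * U + U * N = (2 * d) • (1 : A)) :
    sqrtEffect α β N * U * sqrtEffect α β N
      = (β * d) • (1 : A) + √(α ^ 2 - β ^ 2) • U + ((α - √(α ^ 2 - β ^ 2)) * d) • N := by
  have hone : sqrtHalfSum α β * sqrtHalfDiff α β * (2 * d) = β * d := by
    linear_combination d * two_mul_sqrtHalfSum_mul_sqrtHalfDiff h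
  have hinv : sqrtHalfDiff α β ^ 2 * (2 * d) = (α - √(α ^ 2 - β ^ 2)) * d := by
    linear_combination
      d * (sqrtHalfSum_sq_add_sqrtHalfDiff_sq h - sqrtHalfSum_sq_sub_sqrtHalfDiff_sq h)
  rw [sqrtEffect, smul_one_add_smul_mul_mul_self _ _ (hN.trans (one_smul ℝ 1).symm) hNU, mul_one,
    hone, hinv, sqrtHalfSum_sq_sub_sqrtHalfDiff_sq h]

theorem stmt_3_general (r : ℝ) (h : |β| ≤ α) (hN : N * N = 1)
    (hNU : N * U + U * N = (2 * d) • (1 : A)) :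
    (2 : ℝ) • (sqrtEffect α β N * ((1 / 2 : ℝ) • ((1 : A) + r • U)) * sqrtEffect α β N)
      = (α + r * β * d) • (1 : A) + (r * √(α ^ 2 - β ^ 2)) • U
        + (β + r * (α - √(α ^ 2 - β ^ 2)) * d) • N := by
  calc (2 : ℝ) • (sqrtEffect α β N * ((1 / 2 : ℝ) • ((1 : A) + r • U)) * sqrtEffect α β N)
      = sqrtEffect α β N * sqrtEffect α β N
          + r • (sqrtEffect α β N * U * sqrtEffect α β N) := by
        simp only [mul_add, add_mul, smul_mul_assoc, mul_smul_comm, mul_one]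
        module
    _ = (α + r * β * d) • (1 : A) + (r * √(α ^ 2 - β ^ 2)) • U
          + (β + r * (α - √(α ^ 2 - β ^ 2)) * d) • N := by
        rw [sqrtEffect_mul_self h hN, sqrtEffect_mul_mul_self h hN hNU]
        module

end SqrtEffect

theorem pauliVec_add (v w : Fin 3 → ℝ) : pauliVec (v + w) = pauliVec v + pauliVec w := by
  simp only [pauliVec, Pi.add_apply]
  module

theorem pauliVec_eq_of (v : Fin 3 → ℝ) :
    pauliVec v = !![(v 2 : ℂ), v 0 - v 1 * Complex.I; v 0 + v 1 * Complex.I, -v 2] := by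
  ext i j
  fin_cases i <;> fin_cases j <;> simp [pauliVec, σx, σy, σz, sub_eq_add_neg]

theorem pauliVec_mul_self (v : Fin 3 → ℝ) :
    pauliVec v * pauliVec v = dot3 v v • (1 : Matrix (Fin 2) (Fin 2) ℂ) := by
  have hdiag : (v 0 - v 1 * Complex.I) * (v 0 + v 1 * Complex.I) + v 2 * v 2 = (dot3 v v : ℂ) := by
    push_cast [dot3]
    linear_combination (-(v 1 : ℂ) ^ 2) * Complex.I_sq
  calc pauliVec v * pauliVec v = !![(dot3 v v : ℂ), 0; 0, dot3 v v] := by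
        rw [pauliVec_eq_of, mul_fin_two, ← hdiag]
        ring_nf
    _ = dot3 v v • (1 : Matrix (Fin 2) (Fin 2) ℂ) := by
        simp [one_fin_two, smul_of]

theorem pauliVec_mul_self_of_unit {v : Fin 3 → ℝ} (hv : v 0 ^ 2 + v 1 ^ 2 + v 2 ^ 2 = 1) :
    pauliVec v * pauliVec v = 1 := by
  have hdot : dot3 v v = 1 := by rw [dot3, ← sq, ← sq, ← sq, hv]
  rw [pauliVec_mul_self, hdot, one_smul]

theorem pauliVec_mul_add_mul (v w : Fin 3 → ℝ) :
    pauliVec v * pauliVec w + pauliVec w * pauliVec v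
      = (2 * dot3 v w) • (1 : Matrix (Fin 2) (Fin 2) ℂ) := by
  have hdot : dot3 (v + w) (v + w) = dot3 v v + 2 * dot3 v w + dot3 w w := by
    simp only [dot3, Pi.add_apply]
    ring
  calc pauliVec v * pauliVec w + pauliVec w * pauliVec v
      = pauliVec (v + w) * pauliVec (v + w) - pauliVec v * pauliVec v
          - pauliVec w * pauliVec w := by
        rw [pauliVec_add]
        noncomm_ring
    _ = (2 * dot3 v w) • (1 : Matrix (Fin 2) (Fin 2) ℂ) := by
        rw [pauliVec_mul_self, pauliVec_mul_self, pauliVec_mul_self, hdot]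
        module

theorem stmt_3 (α β r : ℝ) (hβ0 : 0 ≤ β) (hβα : β ≤ α)
    (n u : Fin 3 → ℝ)
    (hn : n 0 ^ 2 + n 1 ^ 2 + n 2 ^ 2 = 1)
    (hu : u 0 ^ 2 + u 1 ^ 2 + u 2 ^ 2 = 1)
    (S1 ρ : Matrix (Fin 2) (Fin 2) ℂ)
    (hS1 : S1 = ((Real.sqrt (α + β) + Real.sqrt (α - β)) / 2) • (1 : Matrix (Fin 2) (Fin 2) ℂ)
        + ((Real.sqrt (α + β) - Real.sqrt (α - β)) / 2) • pauliVec n)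
    (hρ : ρ = (1 / 2 : ℝ) • ((1 : Matrix (Fin 2) (Fin 2) ℂ) + r • pauliVec u)) :
    (2 : ℝ) • (S1 * ρ * S1)
      = (α + r * β * dot3 n u) • (1 : Matrix (Fin 2) (Fin 2) ℂ)
        + (r * Real.sqrt (α ^ 2 - β ^ 2)) • pauliVec u
        + (β + r * (α - Real.sqrt (α ^ 2 - β ^ 2)) * dot3 n u) • pauliVec n := by
  rw [hS1, hρ]
  exact stmt_3_general r ((abs_of_nonneg hβ0).trans_le hβα) (pauliVec_mul_self_of_unit hn)
    (pauliVec_mul_add_mul n u)
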